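/- Let n, m be nonzero integers, let α ∈ ℂ with α ≠ 2 and α ≠ −2, and let P ∈ ℂ[s,t,u] be the polynomial P = 2 + φ_{|n|}(s)²·φ_{|m|}(t)²·(s² + t² + u² − s·t·u − 4) (the trace polynomial of the word [xⁿ,yᵐ]). Then the trace surface H = {(s,t,u) : P(s,t,u) = α} is irreducible; equivalently, the zero locus of the polynomial P − α in the prime spectrum of ℂ[s,t,u] is an irreducible closed set. -/

import Mathlib

open MvPolynomial

/-- `φ_k`, the Dickson polynomial of the second kind `E_{k-1}(X,1)`:
`φ_1 = 1`, `φ_2 = X`, `φ_{k+1} = X·φ_k − φ_{k−1}`. -/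
noncomputable def phi (k : ℕ) : Polynomial ℂ := Polynomial.dickson 2 (1 : ℂ) (k - 1)

/-!
Replace the two Dickson polynomials by arbitrary nonzero `p, q` over a ring `R`, and write
`e = p(s) q(t)`. As a polynomial in `u`, the function `P - α` arises from a monic quadratic over
`R[s][t]` by the substitution `v = e u`, and its constant coefficient is coprime to `e`; by Gauss's
lemma it is therefore irreducible as soon as the monic quadratic has no root in `R[s][t]`. Such a
root would have degree at most `deg e + 1` in `t`, and dividing its coefficient of that degree by
the leading coefficient of `e` would give a root of `z ^ 2 - s z + 1` in `R[s]`. There is none: it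
would be a unit of `R[s]`, hence constant, and so would `s - z = z⁻¹`.
-/

section IntegrallyClosed

open scoped Polynomial

variable {A : Type*} [CommRing A]

theorem isPrimitive_comp_C_mul_X {f : A[X]} (hf : f.Monic) {e : A}
    (hcop : IsCoprime e (f.coeff 0)) :
    (f.comp (Polynomial.C e * Polynomial.X)).IsPrimitive := by
  intro r hr
  rw [Polynomial.C_dvd_iff_dvd_coeff] at hr
  have hlead : r ∣ e ^ f.natDegree := by
    simpa only [Polynomial.comp_C_mul_X_coeff, hf.coeff_natDegree, one_mul] using hr f.natDegree
  have hconst : r ∣ f.coeff 0 := by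
    simpa only [Polynomial.comp_C_mul_X_coeff, pow_zero, mul_one] using hr 0
  exact hcop.pow_left.isUnit_of_dvd' hlead hconst

theorem irreducible_comp_C_mul_X [IsDomain A] [IsIntegrallyClosed A] {f : A[X]} (hf : f.Monic)
    (hirr : Irreducible f) {e : A} (he : e ≠ 0) (hcop : IsCoprime e (f.coeff 0)) :
    Irreducible (f.comp (Polynomial.C e * Polynomial.X)) := by
  let K := FractionRing A
  have hinj : Function.Injective (algebraMap A K) := IsFractionRing.injective A K
  refine (isPrimitive_comp_C_mul_X hf hcop).irreducible_of_irreducible_map_of_injective hinj ?_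
  let _ : Invertible (algebraMap A K e) := invertibleOfNonzero ((map_ne_zero_iff _ hinj).2 he)
  let rescale : K[X] ≃ₐ[K] K[X] := Polynomial.algEquivCMulXAddC (algebraMap A K e) 0
  have hrescale : (f.comp (Polynomial.C e * Polynomial.X)).map (algebraMap A K) =
      rescale (f.map (algebraMap A K)) := by
    rw [Polynomial.map_comp, Polynomial.comp_eq_aeval]
    simp [rescale, Polynomial.algEquivCMulXAddC, -Polynomial.aeval_map_algebraMap]
  rw [hrescale, MulEquiv.irreducible_iff]
  exact hf.irreducible_iff_irreducible_map_fraction_map.1 hirr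

theorem dvd_of_sq_add_mul_add_sq_eq_zero [IsDomain A] [IsIntegrallyClosed A] {a b x y : A}
    (h : y ^ 2 + a * x * y + b * x ^ 2 = 0) : x ∣ y := by
  obtain rfl | hx := eq_or_ne x 0
  · simpa using h
  let φ := algebraMap A (FractionRing A)
  have hφ : Function.Injective φ := IsFractionRing.injective A (FractionRing A)
  have hxφ : φ x ≠ 0 := (map_ne_zero_iff _ hφ).2 hx
  have hint : IsIntegral A (φ y / φ x) := by
    refine ⟨Polynomial.X ^ 2 + Polynomial.C a * Polynomial.X + Polynomial.C b, by monicity!, ?_⟩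
    have hmap : φ y ^ 2 + φ a * φ x * φ y + φ b * φ x ^ 2 = 0 := by
      simpa only [map_add, map_mul, map_pow, map_zero] using congrArg φ h
    simp only [Polynomial.eval₂_add, Polynomial.eval₂_mul, Polynomial.eval₂_pow,
      Polynomial.eval₂_X, Polynomial.eval₂_C]
    change (φ y / φ x) ^ 2 + φ a * (φ y / φ x) + φ b = 0
    field_simp
    linear_combination hmap
  obtain ⟨z, hz⟩ := IsIntegrallyClosed.isIntegral_iff.1 hint
  exact ⟨z, hφ (by rw [map_mul, hz, mul_div_cancel₀ _ hxφ])⟩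

theorem natDegree_le_of_sq_eq_mul_add [NoZeroDivisors A] {y g h : A[X]} {k : ℕ}
    (hg : g.natDegree ≤ k) (hh : h.natDegree ≤ 2 * k) (heq : y ^ 2 = g * y + h) :
    y.natDegree ≤ k := by
  have hle : 2 * y.natDegree ≤ max (k + y.natDegree) (2 * k) := by
    rw [← Polynomial.natDegree_pow, heq]
    exact Polynomial.natDegree_add_le_of_le (Polynomial.natDegree_mul_le_of_le hg le_rfl) hh
  lia

end IntegrallyClosed

section TraceQuadratic

open scoped Polynomial

variable {A : Type*} [CommRing A]

/-- The monic quadratic `v ^ 2 - e s t v + e ^ 2 (t ^ 2 + d) + c` in `v` over `A[t]`. It turns into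
`P - α` under the substitution `v = e u` when `A = R[s]`, `e = p(s) q(t)`, `d = s ^ 2 - 4` and
`c = 2 - α`. -/
noncomputable def traceQuadratic (s d c : A) (e : A[X]) : A[X][X] :=
  Polynomial.X ^ 2 - Polynomial.C (e * (Polynomial.C s * Polynomial.X)) * Polynomial.X +
    Polynomial.C (e ^ 2 * (Polynomial.X ^ 2 + Polynomial.C d) + Polynomial.C c)

theorem traceQuadratic_eval (s d c : A) (e y : A[X]) :
    (traceQuadratic s d c e).eval y = y ^ 2 - e * (Polynomial.C s * Polynomial.X) * y +
      (e ^ 2 * (Polynomial.X ^ 2 + Polynomial.C d) + Polynomial.C c) := by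
  simp only [traceQuadratic, Polynomial.eval_add, Polynomial.eval_sub, Polynomial.eval_mul,
    Polynomial.eval_pow, Polynomial.eval_X, Polynomial.eval_C]

theorem traceQuadratic_comp_C_mul_X (s d c : A) (e : A[X]) :
    (traceQuadratic s d c e).comp (Polynomial.C e * Polynomial.X) =
      Polynomial.C e ^ 2 *
        (Polynomial.X ^ 2 - Polynomial.C (Polynomial.C s * Polynomial.X) * Polynomial.X +
          Polynomial.C (Polynomial.X ^ 2 + Polynomial.C d)) +
        Polynomial.C (Polynomial.C c) := by
  simp only [traceQuadratic, Polynomial.add_comp, Polynomial.sub_comp, Polynomial.mul_comp,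
    Polynomial.pow_comp, Polynomial.X_comp, Polynomial.C_comp, Polynomial.C_add,
    Polynomial.C_mul, Polynomial.C_pow]
  ring

theorem traceQuadratic_monic (s d c : A) (e : A[X]) : (traceQuadratic s d c e).Monic := by
  unfold traceQuadratic
  monicity!

theorem traceQuadratic_natDegree [Nontrivial A] (s d c : A) (e : A[X]) :
    (traceQuadratic s d c e).natDegree = 2 := by
  unfold traceQuadratic
  compute_degree!

theorem isCoprime_traceQuadratic_coeff_zero (s d : A) {c : A} (hc : IsUnit c) (e : A[X]) :
    IsCoprime e ((traceQuadratic s d c e).coeff 0) := by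
  have hconst : (traceQuadratic s d c e).coeff 0 =
      Polynomial.C c + e * (e * (Polynomial.X ^ 2 + Polynomial.C d)) := by
    rw [Polynomial.coeff_zero_eq_eval_zero, traceQuadratic_eval]
    ring
  rw [hconst]
  exact (isCoprime_one_right.of_isCoprime_of_dvd_right
    (hc.map Polynomial.C).dvd).add_mul_left_right _

theorem natDegree_le_of_traceQuadratic_isRoot [NoZeroDivisors A] {s d c : A} {e y : A[X]}
    (hy : (traceQuadratic s d c e).IsRoot y) : y.natDegree ≤ e.natDegree + 1 := by
  rw [Polynomial.IsRoot, traceQuadratic_eval] at hy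
  refine natDegree_le_of_sq_eq_mul_add (g := e * (Polynomial.C s * Polynomial.X))
    (h := -(e ^ 2 * (Polynomial.X ^ 2 + Polynomial.C d) + Polynomial.C c)) ?_ ?_
    (by linear_combination hy)
  · compute_degree
  · compute_degree!

theorem traceQuadratic_eval_coeff (s d c : A) {e y : A[X]} {k : ℕ} (he : e.natDegree ≤ k)
    (hy : y.natDegree ≤ k + 1) :
    ((traceQuadratic s d c e).eval y).coeff (2 * (k + 1)) =
      y.coeff (k + 1) ^ 2 - s * e.coeff k * y.coeff (k + 1) + e.coeff k ^ 2 := by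
  have hst : (Polynomial.C s * Polynomial.X : A[X]).natDegree ≤ 1 := by compute_degree
  have htd : (Polynomial.X ^ 2 + Polynomial.C d : A[X]).natDegree ≤ 2 := by compute_degree
  have hsq : (y ^ 2).coeff (2 * (k + 1)) = y.coeff (k + 1) ^ 2 :=
    Polynomial.coeff_pow_of_natDegree_le hy
  have hlin : (e * (Polynomial.C s * Polynomial.X) * y).coeff (2 * (k + 1)) =
      e.coeff k * s * y.coeff (k + 1) := by
    rw [two_mul, Polynomial.coeff_mul_add_eq_of_natDegree_le
        (Polynomial.natDegree_mul_le_of_le he hst) hy,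
      Polynomial.coeff_mul_add_eq_of_natDegree_le he hst, Polynomial.coeff_C_mul,
      Polynomial.coeff_X_one, mul_one]
  have hquad : (e ^ 2 * (Polynomial.X ^ 2 + Polynomial.C d)).coeff (2 * (k + 1)) =
      e.coeff k ^ 2 := by
    rw [mul_add_one, Polynomial.coeff_mul_add_eq_of_natDegree_le
        (Polynomial.natDegree_pow_le_of_le 2 he) htd, Polynomial.coeff_pow_of_natDegree_le he]
    simp
  have hconst : (Polynomial.C c).coeff (2 * (k + 1)) = 0 :=
    Polynomial.coeff_C_of_ne_zero (by lia)
  rw [traceQuadratic_eval, Polynomial.coeff_add, Polynomial.coeff_sub, Polynomial.coeff_add, hsq,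
    hlin, hquad, hconst]
  ring

theorem traceQuadratic_not_isRoot [IsDomain A] [IsIntegrallyClosed A] {s : A}
    (hs : ∀ z : A, z ^ 2 - s * z + 1 ≠ 0) (d c : A) {e : A[X]} (he : e ≠ 0) (y : A[X]) :
    ¬ (traceQuadratic s d c e).IsRoot y := by
  intro hy
  have htop := traceQuadratic_eval_coeff s d c le_rfl (natDegree_le_of_traceQuadratic_isRoot hy)
  rw [hy.eq_zero, Polynomial.coeff_zero, Polynomial.coeff_natDegree] at htop
  obtain ⟨z, hz⟩ : e.leadingCoeff ∣ y.coeff (e.natDegree + 1) :=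
    dvd_of_sq_add_mul_add_sq_eq_zero (a := -s) (b := 1) (by linear_combination -htop)
  refine hs z (mul_left_cancel₀ (pow_ne_zero 2 (Polynomial.leadingCoeff_ne_zero.2 he)) ?_)
  rw [hz] at htop
  linear_combination -htop

theorem traceQuadratic_irreducible [IsDomain A] [IsIntegrallyClosed A] {s : A}
    (hs : ∀ z : A, z ^ 2 - s * z + 1 ≠ 0) (d c : A) {e : A[X]} (he : e ≠ 0) :
    Irreducible (traceQuadratic s d c e) := by
  have hdeg := traceQuadratic_natDegree s d c e
  rw [(traceQuadratic_monic s d c e).irreducible_iff_roots_eq_zero_of_degree_le_three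
    (by lia) (by lia)]
  exact Multiset.eq_zero_of_forall_notMem fun y hy ↦
    traceQuadratic_not_isRoot hs d c he y (Polynomial.isRoot_of_mem_roots hy)

theorem sq_sub_X_mul_add_one_ne_zero [IsDomain A] (z : A[X]) :
    z ^ 2 - Polynomial.X * z + 1 ≠ 0 := by
  intro h
  have hmul : z * (Polynomial.X - z) = 1 := by linear_combination -h
  obtain ⟨r, -, rfl⟩ := Polynomial.isUnit_iff.1 (IsUnit.of_mul_eq_one _ hmul)
  exact Polynomial.not_isUnit_X_sub_C r (IsUnit.of_mul_eq_one_right _ hmul)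

end TraceQuadratic

section TraceSurface

open scoped Polynomial

variable (R : Type*) [CommRing R]

/-- The identification of `R[s, t, u]` with the iterated polynomial ring `R[s][t][u]`, in which
the equation of a trace surface is quadratic in the outermost variable `u`. -/
noncomputable def iteratedPolynomialEquiv : MvPolynomial (Fin 3) R ≃ₐ[R] R[X][X][X] :=
  (renameEquiv R Fin.revPerm).trans <| (finSuccEquiv R 2).trans <| Polynomial.mapAlgEquiv <|
    (finSuccEquiv R 1).trans <| Polynomial.mapAlgEquiv (uniqueAlgEquiv R (Fin 1))

variable {R}

theorem iteratedPolynomialEquiv_X_zero :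
    iteratedPolynomialEquiv R (X 0) = Polynomial.C (Polynomial.C Polynomial.X) := by
  have hrev : Fin.rev (0 : Fin 3) = 2 := rfl
  have houter : finSuccEquiv R 2 (X 2) = Polynomial.C (X 1) := finSuccEquiv_X_succ (j := 1)
  have hinner : finSuccEquiv R 1 (X 1) = Polynomial.C (X 0) := finSuccEquiv_X_succ (j := 0)
  simp [iteratedPolynomialEquiv, hrev, houter, hinner]

theorem iteratedPolynomialEquiv_X_one :
    iteratedPolynomialEquiv R (X 1) = Polynomial.C Polynomial.X := by
  have hrev : Fin.rev (1 : Fin 3) = 1 := rfl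
  have houter : finSuccEquiv R 2 (X 1) = Polynomial.C (X 0) := finSuccEquiv_X_succ (j := 0)
  simp [iteratedPolynomialEquiv, hrev, houter, finSuccEquiv_X_zero]

theorem iteratedPolynomialEquiv_X_two : iteratedPolynomialEquiv R (X 2) = Polynomial.X := by
  have hrev : Fin.rev (2 : Fin 3) = 0 := rfl
  simp [iteratedPolynomialEquiv, hrev, finSuccEquiv_X_zero]

theorem iteratedPolynomialEquiv_C (r : R) :
    iteratedPolynomialEquiv R (C r) = Polynomial.C (Polynomial.C (Polynomial.C r)) :=
  (iteratedPolynomialEquiv R).commutes r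

theorem iteratedPolynomialEquiv_aeval_X_zero (p : R[X]) :
    iteratedPolynomialEquiv R (Polynomial.aeval (X 0) p) = Polynomial.C (Polynomial.C p) := by
  rw [← Polynomial.aeval_algHom_apply, iteratedPolynomialEquiv_X_zero]
  exact (Polynomial.aeval_algebraMap_apply R[X][X][X] Polynomial.X p).trans <|
    congrArg (algebraMap R[X] R[X][X][X]) (Polynomial.aeval_X_left_apply p)

theorem iteratedPolynomialEquiv_aeval_X_one (q : R[X]) :
    iteratedPolynomialEquiv R (Polynomial.aeval (X 1) q) =
      Polynomial.C (q.map Polynomial.C) := by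
  rw [← Polynomial.aeval_algHom_apply, iteratedPolynomialEquiv_X_one]
  exact (Polynomial.aeval_algebraMap_apply R[X][X][X] Polynomial.X q).trans <|
    congrArg Polynomial.C (Polynomial.aeval_X_left_eq_map q)

theorem irreducible_tracePolynomial_add_C [IsDomain R] [IsIntegrallyClosed R] {p q : R[X]}
    (hp : p ≠ 0) (hq : q ≠ 0) {c : R} (hc : IsUnit c) :
    Irreducible (Polynomial.aeval (X 0 : MvPolynomial (Fin 3) R) p ^ 2 *
      Polynomial.aeval (X 1 : MvPolynomial (Fin 3) R) q ^ 2 *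
      (X 0 ^ 2 + X 1 ^ 2 + X 2 ^ 2 - X 0 * X 1 * X 2 - 4) + C c) := by
  have he : Polynomial.C p * q.map Polynomial.C ≠ 0 :=
    mul_ne_zero (Polynomial.C_ne_zero.2 hp)
      ((Polynomial.map_ne_zero_iff Polynomial.C_injective).2 hq)
  rw [← MulEquiv.irreducible_iff (iteratedPolynomialEquiv R)]
  convert irreducible_comp_C_mul_X (traceQuadratic_monic _ _ _ _)
    (traceQuadratic_irreducible sq_sub_X_mul_add_one_ne_zero (Polynomial.X ^ 2 - 4)
      (Polynomial.C c) he) he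
    (isCoprime_traceQuadratic_coeff_zero _ _ (hc.map Polynomial.C) _) using 1
  rw [traceQuadratic_comp_C_mul_X]
  simp only [map_add, map_sub, map_mul, map_pow, map_ofNat,
    iteratedPolynomialEquiv_X_zero, iteratedPolynomialEquiv_X_one, iteratedPolynomialEquiv_X_two,
    iteratedPolynomialEquiv_C, iteratedPolynomialEquiv_aeval_X_zero,
    iteratedPolynomialEquiv_aeval_X_one]
  ring

theorem isIrreducible_zeroLocus_singleton {S : Type*} [CommRing S] {f : S} (hf : Prime f) :
    IsIrreducible (PrimeSpectrum.zeroLocus {f}) := by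
  have hprime : (Ideal.span {f}).IsPrime := (Ideal.span_singleton_prime hf.ne_zero).2 hf
  rw [← PrimeSpectrum.zeroLocus_span, PrimeSpectrum.isIrreducible_zeroLocus_iff, hprime.radical]
  exact hprime

theorem trace_surface_irreducible_general [IsDomain R] [UniqueFactorizationMonoid R]
    {p q : R[X]} (hp : p ≠ 0) (hq : q ≠ 0) {α : R} (hα : IsUnit (2 - α)) :
    IsIrreducible (PrimeSpectrum.zeroLocus {C 2 +
      Polynomial.aeval (X 0 : MvPolynomial (Fin 3) R) p ^ 2 *
      Polynomial.aeval (X 1 : MvPolynomial (Fin 3) R) q ^ 2 *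
      (X 0 ^ 2 + X 1 ^ 2 + X 2 ^ 2 - X 0 * X 1 * X 2 - 4) - C α}) := by
  apply isIrreducible_zeroLocus_singleton
  rw [add_sub_right_comm, ← C_sub, add_comm]
  exact (irreducible_tracePolynomial_add_C hp hq hα).prime

end TraceSurface

theorem phi_ne_zero (k : ℕ) : phi k ≠ 0 := by
  intro h
  have heval : (phi k).eval 2 = ((k - 1 : ℕ) : ℂ) + 1 := by
    rw [phi, Polynomial.dickson_two_one_eq_chebyshev_S, Polynomial.Chebyshev.S_eval_two]
    norm_cast
  rw [h, Polynomial.eval_zero] at heval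
  exact Nat.cast_add_one_ne_zero _ heval.symm

/-- the trace surface `{P = α}` for `P` the trace polynomial of `[xⁿ,yᵐ]`
and `α ≠ ±2` is irreducible: the zero locus of `P − α` in the prime spectrum of
`ℂ[s,t,u]` is an irreducible closed set. -/
theorem trace_surface_irreducible (n m : ℤ) (hn : n ≠ 0) (hm : m ≠ 0)
    (α : ℂ) (hα : α ≠ 2) (hα' : α ≠ -2)
    (P : MvPolynomial (Fin 3) ℂ)
    (hP : P = C 2 +
        (Polynomial.aeval (X 0 : MvPolynomial (Fin 3) ℂ) (phi n.natAbs)) ^ 2 *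
        (Polynomial.aeval (X 1 : MvPolynomial (Fin 3) ℂ) (phi m.natAbs)) ^ 2 *
        (X 0 ^ 2 + X 1 ^ 2 + X 2 ^ 2 - X 0 * X 1 * X 2 - 4)) :
    IsIrreducible (PrimeSpectrum.zeroLocus ({P - C α} : Set (MvPolynomial (Fin 3) ℂ))) := by
  subst hP
  exact trace_surface_irreducible_general (phi_ne_zero _) (phi_ne_zero _)
    (sub_ne_zero.2 hα.symm).isUnit
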